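/- Let V be a type, let r₁ and r₂ be binary relations on V (the edge relations of graphs L₁ and L₂, where x r y means y is a successor of x) with r₁ ≤ r₂ (L₁ is a subgraph of L₂), and let S ⊆ V (the node set of the right-hand side R, a subgraph of L₁). Then the set of nodes reachable under r₂ from the set of nodes reachable under r₁ from S equals the set of nodes reachable under r₂ from S: Reach_{r₂}(Reach_{r₁}(S)) = Reach_{r₂}(S). Consequently gr(gr(R, L₁), L₂) = gr(R, L₂), i.e. the R-garbage removal rewriting system is functorial. -/

import Mathlib

/-- The set of nodes reachable from `S` under the edge relation `r`. -/
def Reach {V : Type*} (r : V → V → Prop) (S : Set V) : Set V :=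
  { y | ∃ x ∈ S, Relation.ReflTransGen r x y }

section Closure

variable {V : Type*} {r r₁ r₂ : V → V → Prop} {S T : Set V}

theorem subset_reach : S ⊆ Reach r S :=
  fun x hx => ⟨x, hx, .refl⟩

theorem reach_mono (hr : r₁ ≤ r₂) (hS : S ⊆ T) : Reach r₁ S ⊆ Reach r₂ T :=
  fun y ⟨x, hx, hxy⟩ => ⟨x, hS hx, Relation.ReflTransGen.mono hr x y hxy⟩

theorem reach_idem : Reach r (Reach r S) = Reach r S :=
  Set.Subset.antisymm (fun _ ⟨_, ⟨x, hx, hxy⟩, hyz⟩ => ⟨x, hx, hxy.trans hyz⟩) subset_reach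

end Closure

/-- If `r₁ ≤ r₂` (the graph `L₁` is a subgraph of `L₂`) and `S`
is a set of nodes, then the nodes reachable under `r₂` from the nodes reachable
under `r₁` from `S` are exactly the nodes reachable under `r₂` from `S`; hence
`gr(gr(R, L₁), L₂) = gr(R, L₂)`, i.e. the R-garbage removal rewriting system is
functorial. -/
theorem reach_reach_eq_reach {V : Type*} (r₁ r₂ : V → V → Prop) (h : r₁ ≤ r₂)
    (S : Set V) :
    Reach r₂ (Reach r₁ S) = Reach r₂ S := by
  refine Set.Subset.antisymm ?_ (reach_mono le_rfl subset_reach)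
  calc
    Reach r₂ (Reach r₁ S) ⊆ Reach r₂ (Reach r₂ S) := reach_mono le_rfl (reach_mono h subset_rfl)
    _ = Reach r₂ S := reach_idem
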